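/- For all integers m, i, r with 0 ≤ i ≤ m and r ≥ 0, Σ_{k=0}^{m} (−1)^{m−k} · {m, k} · ⟦k+r+1, i+r+1⟧_{r+1} = C(m, i) · (r+1)^{m−i}, where {n,k} denotes the Stirling number of the second kind and C(a,b) is a binomial coefficient. -/

import Mathlib

/-- The `r`-Stirling numbers of the first kind `⟦n,k⟧_r`: `⟦r,r⟧_r = 1`,
`⟦n,k⟧_r = 0` if `n < r` or `k < r`, and
`⟦n,k⟧_r = (n-1)·⟦n-1,k⟧_r + ⟦n-1,k-1⟧_r` for `n > r`. -/
def rStirling1 (r : ℕ) : ℕ → ℕ → ℕ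
  | 0, k => if r = 0 ∧ k = 0 then 1 else 0
  | (n+1), k =>
    if n + 1 < r ∨ k < r then 0
    else if n + 1 = r then (if k = r then 1 else 0)
    else if k = 0 then 0
    else n * rStirling1 r n k + rStirling1 r n (k - 1)

/-- The (unsigned) Stirling numbers of the first kind. -/
def stirling1 : ℕ → ℕ → ℕ := rStirling1 0
/-- The Stirling numbers of the second kind. -/
def stirling2 : ℕ → ℕ → ℕ
  | 0, k => if k = 0 then 1 else 0
  | (_+1), 0 => 0
  | (n+1), (k+1) => (k+1) * stirling2 n (k+1) + stirling2 n k

/-!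
The `r`-Stirling numbers `⟦k+r, i+r⟧_r` are the coefficients of the shifted rising factorial
`(X + r)(X + r + 1)⋯(X + r + k - 1)`, while the signed Stirling numbers of the second kind
`(-1)^(m-k) {m, k}` expand the power `x ^ m` in the rising factorials of `x`. Taking `x = X + r`
and comparing coefficients of `X ^ i` in `(X + r) ^ m` gives the identity.
-/

open Finset Polynomial

theorem stirling2_eq_stirlingSecond (n k : ℕ) : stirling2 n k = n.stirlingSecond k := by
  fun_induction stirling2 n k with
  | case1 => rfl
  | case2 k hk => exact (Nat.stirlingSecond_eq_zero_of_lt (Nat.pos_of_ne_zero hk)).symm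
  | case3 => rfl
  | case4 n k ih_same ih_prev => rw [Nat.stirlingSecond_succ_succ, ih_same, ih_prev]

theorem sum_stirlingSecond_succ_mul {R : Type*} [CommSemiring R] (m : ℕ) (a : ℕ → R) :
    ∑ k ∈ range (m + 2), ((m + 1).stirlingSecond k : R) * a k =
      ∑ k ∈ range (m + 1), (m.stirlingSecond k : R) * (a (k + 1) + k * a k) := by
  have shift : ∑ k ∈ range (m + 1), (m.stirlingSecond (k + 1) : R) * ((k + 1 : ℕ) * a (k + 1)) =
      ∑ k ∈ range (m + 1), (m.stirlingSecond k : R) * (k * a k) := by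
    have split_first := sum_range_succ' (fun k ↦ (m.stirlingSecond k : R) * (k * a k)) (m + 1)
    have split_last := sum_range_succ (fun k ↦ (m.stirlingSecond k : R) * (k * a k)) (m + 1)
    simp only [Nat.cast_zero, zero_mul, mul_zero, add_zero] at split_first
    rw [← split_first, split_last, Nat.stirlingSecond_eq_zero_of_lt m.lt_succ_self]
    simp only [Nat.cast_zero, zero_mul, add_zero]
  simp only [mul_add, sum_add_distrib]
  rw [sum_range_succ', ← shift, ← sum_add_distrib, Nat.stirlingSecond_succ_zero, Nat.cast_zero,
    zero_mul, add_zero]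
  refine sum_congr rfl fun k _ ↦ ?_
  rw [Nat.stirlingSecond_succ_succ]
  push_cast
  ring

theorem sum_stirlingSecond_mul_descPochhammer_eval {R : Type*} [CommRing R] (m : ℕ) (x : R) :
    ∑ k ∈ range (m + 1), (m.stirlingSecond k : R) * (descPochhammer R k).eval x = x ^ m := by
  induction m with
  | zero => simp
  | succ m ih =>
    have mul_eval (k : ℕ) :
        (descPochhammer R (k + 1)).eval x + k * (descPochhammer R k).eval x =
          x * (descPochhammer R k).eval x := by
      rw [descPochhammer_succ_eval]
      ring
    simp only [sum_stirlingSecond_succ_mul, mul_eval, mul_left_comm _ x, ← mul_sum, ih, pow_succ']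

theorem sum_neg_one_pow_mul_stirlingSecond_mul_ascPochhammer_eval {R : Type*} [CommRing R]
    (m : ℕ) (x : R) :
    ∑ k ∈ range (m + 1),
        (-1) ^ (m - k) * (m.stirlingSecond k : R) * (ascPochhammer R k).eval x = x ^ m := by
  calc
    _ = ∑ k ∈ range (m + 1),
          (-1) ^ m * ((m.stirlingSecond k : R) * (descPochhammer R k).eval (-x)) := by
      refine sum_congr rfl fun k hk ↦ ?_
      have reflect : (ascPochhammer R k).eval x = (-1) ^ k * (descPochhammer R k).eval (-x) := by
        rw [← ascPochhammer_eval_neg_eq_descPochhammer, neg_neg]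
      rw [reflect, ← Nat.sub_add_cancel (mem_range_succ_iff.mp hk), pow_add, Nat.add_sub_cancel]
      ring
    _ = (-1) ^ m * (-x) ^ m := by rw [← mul_sum, sum_stirlingSecond_mul_descPochhammer_eval]
    _ = x ^ m := by rw [← mul_pow, neg_one_mul, neg_neg]

theorem rStirling1_eq_zero_of_right_lt {r k : ℕ} (n : ℕ) (hk : k < r) : rStirling1 r n k = 0 := by
  cases n with
  | zero => rw [rStirling1, if_neg (by omega)]
  | succ n => rw [rStirling1, if_pos (.inr hk)]

theorem rStirling1_self_left (r k : ℕ) : rStirling1 r r k = if k = r then 1 else 0 := by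
  cases r with
  | zero => simp only [rStirling1, true_and]
  | succ r =>
    rcases lt_or_ge k (r + 1) with hk | hk
    · rw [rStirling1_eq_zero_of_right_lt _ hk, if_neg hk.ne]
    · rw [rStirling1, if_neg (by omega), if_pos rfl]

theorem rStirling1_succ_succ {r n : ℕ} (hn : r ≤ n) (k : ℕ) :
    rStirling1 r (n + 1) (k + 1) = n * rStirling1 r n (k + 1) + rStirling1 r n k := by
  rcases lt_or_ge (k + 1) r with hk | hk
  · simp only [rStirling1_eq_zero_of_right_lt _ hk,
      rStirling1_eq_zero_of_right_lt _ (k.lt_succ_self.trans hk), mul_zero, add_zero]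
  · rw [rStirling1, if_neg (by omega), if_neg (by omega), if_neg k.succ_ne_zero,
      Nat.add_sub_cancel]

theorem rStirling1_succ_self {r n : ℕ} (hn : r ≤ n) :
    rStirling1 r (n + 1) r = n * rStirling1 r n r := by
  cases r with
  | zero => cases n <;> simp [rStirling1]
  | succ r =>
    rw [rStirling1_succ_succ hn, rStirling1_eq_zero_of_right_lt n r.lt_succ_self, add_zero]

theorem coeff_ascPochhammer_eval_X_add_C {R : Type*} [CommSemiring R] (r n i : ℕ) :
    ((ascPochhammer R[X] n).eval (X + C (r : R))).coeff i = rStirling1 r (n + r) (i + r) := by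
  induction n generalizing i with
  | zero => simp [rStirling1_self_left, coeff_one]
  | succ n ih =>
    have factor : (ascPochhammer R[X] (n + 1)).eval (X + C (r : R)) =
        (ascPochhammer R[X] n).eval (X + C (r : R)) * X +
          C ((n + r : ℕ) : R) * (ascPochhammer R[X] n).eval (X + C (r : R)) := by
      rw [ascPochhammer_succ_eval, Nat.cast_add, C_add, C_eq_natCast n]
      ring
    rw [factor, coeff_add, coeff_C_mul, ih, Nat.add_right_comm n 1 r]
    cases i with
    | zero => simp only [coeff_mul_X_zero, zero_add, rStirling1_succ_self (Nat.le_add_left r n),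
        Nat.cast_mul]
    | succ i =>
      rw [coeff_mul_X, ih, Nat.add_right_comm i 1 r, rStirling1_succ_succ (Nat.le_add_left r n)]
      push_cast
      ring

theorem stmt15_general (m i r : ℕ) :
    ∑ k ∈ range (m + 1), (-1 : ℤ) ^ (m - k) * stirling2 m k * rStirling1 r (k + r) (i + r) =
      m.choose i * (r : ℤ) ^ (m - i) := by
  have expansion := congrArg (coeff · i)
    (sum_neg_one_pow_mul_stirlingSecond_mul_ascPochhammer_eval m (X + C (r : ℤ)))
  simp only [finsetSum_coeff, coeff_X_add_C_pow] at expansion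
  rw [mul_comm, ← expansion]
  refine sum_congr rfl fun k _ ↦ ?_
  have sign_cast : (-1 : ℤ[X]) ^ (m - k) * (m.stirlingSecond k : ℤ[X]) =
      C ((-1) ^ (m - k) * (m.stirlingSecond k : ℤ)) := by simp
  rw [sign_cast, coeff_C_mul, coeff_ascPochhammer_eval_X_add_C, stirling2_eq_stirlingSecond]

theorem stmt15 (m i r : ℕ) (h : i ≤ m) :
    ∑ k ∈ Finset.range (m + 1),
        (-1 : ℤ) ^ (m - k) * stirling2 m k * rStirling1 (r + 1) (k + r + 1) (i + r + 1) =
      m.choose i * (r + 1 : ℤ) ^ (m - i) := by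
  simpa only [add_assoc, Nat.cast_add, Nat.cast_one] using stmt15_general m i (r + 1)
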